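/- arXiv:1503.01593 — 2 statements merged into one kernel-verified Lean document; each statement's English description precedes it below -/
import Mathlib

section
/- Let p ≥ 2, let a : {0,1,…,p−1} → ℤ take values in {−1,0,1} with a(0) = 1, and let Θ be the 2p×2p integer matrix Θ = (Γ − I)ω built from a as in the context. Then the polynomial det(I − tΘ) ∈ ℤ[t] equals (1 − (−1)^p t^p)² + 2(1 − (−1)^p t^p)·u_p(t), where u_p(t) = Σ_{k=1}^{p−1} (−1)^k a(k) t^k + (−1)^p t^p. (Equivalently, det(I − tΘ) = (1 − (−1)^p t^p)² (1+t) D(t), where D(t) is the kneading determinant of the p-periodic kneading sequence whose symbols have Φ-values a(0),…,a(p−1).) -/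
open Polynomial Matrix

lemma aux_det {R : Type*} [CommRing R] (n : ℕ) (t : R) (c : Fin (n+1) → R) :
    Matrix.det (Matrix.of fun i j : Fin (n+1) => if j = 0 then c i else
      if i = j then 1 else if (j : ℕ) = i + 1 then t else 0) = ∑ i : Fin (n+1), (-t) ^ (i : ℕ) * c i := by
  set B : Matrix (Fin (n+1)) (Fin (n+1)) R := Matrix.of fun i j : Fin (n+1) => if j = 0 then c i else
      if i = j then 1 else if (j : ℕ) = i + 1 then t else 0 with hB
  have h1 := Matrix.det_updateRow_sum B 0 (fun i => (-t) ^ (i : ℕ))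
  simp only [Fin.val_zero, pow_zero, one_smul] at h1
  rw [← h1, Matrix.det_succ_row_zero, Fin.sum_univ_succ]
  have hz : ∀ j : Fin n, (∑ k : Fin (n+1), (-t) ^ (k : ℕ) • B k) j.succ = 0 := by
    intro j
    simp only [Finset.sum_apply, Pi.smul_apply, smul_eq_mul]
    rw [← Finset.sum_subset (Finset.subset_univ {j.succ, j.castSucc})]
    · rw [Finset.sum_pair (by simp [Fin.ext_iff])]
      simp [hB, Fin.ext_iff, -Fin.val_eq_zero_iff]
      try ring
    · intro x _ hx
      simp only [Finset.mem_insert, Finset.mem_singleton, Fin.ext_iff, Fin.val_succ, Fin.val_castSucc, not_or] at hx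
      simp only [hB, Matrix.of_apply, Fin.ext_iff, Fin.val_succ, Fin.val_zero]
      rw [if_neg (by omega), if_neg (by omega), if_neg (by omega), mul_zero]
  have hrest : ∀ j : Fin n, (B.updateRow 0 (∑ k : Fin (n+1), (-t) ^ (k : ℕ) • B k)) 0 j.succ = 0 := by
    intro j; rw [Matrix.updateRow_self, hz]
  simp only [hrest, mul_zero, zero_mul, Finset.sum_const_zero, add_zero]
  rw [Matrix.updateRow_self, Matrix.det_of_isUpperTriangular]
  · simp [hB, Matrix.updateRow_apply, Finset.sum_apply]
  · intro i j hij
    simp only [id] at hij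
    have := Fin.lt_def.1 hij
    simp only [hB, Matrix.updateRow_apply, Matrix.submatrix_apply, Fin.zero_succAbove, Matrix.of_apply, Fin.ext_iff, Fin.val_succ, Fin.val_zero]
    rw [if_neg (by omega), if_neg (by omega), if_neg (by omega), if_neg (by omega)]

lemma aux_block {R m : Type*} [CommRing R] [Fintype m] [DecidableEq m] (A B : Matrix m m R) :
    (Matrix.fromBlocks A B B A).det = (A + B).det * (A - B).det := by
  have h : Matrix.fromBlocks 1 1 0 1 * Matrix.fromBlocks A B B A * Matrix.fromBlocks 1 (-1) 0 1
      = Matrix.fromBlocks (A + B) 0 B (A - B) := by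
    simp [Matrix.fromBlocks_multiply, sub_eq_add_neg, add_comm]
    abel
  have h2 := congrArg Matrix.det h
  simpa [Matrix.det_mul, Matrix.det_fromBlocks_zero₂₁, Matrix.det_fromBlocks_zero₁₂] using h2

theorem det_one_sub_smul_theta (p : ℕ) (hp : 2 ≤ p) (a : ℕ → ℤ)
    (ha : ∀ k < p, a k = -1 ∨ a k = 0 ∨ a k = 1) (ha0 : a 0 = 1)
    (s : Fin (2 * p) → ℤ)
    (hs : ∀ i, s i = if (i : ℕ) < p then a i else -a ((i : ℕ) - p))
    (ω : Matrix (Fin (2 * p)) (Fin (2 * p)) ℤ)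
    (hω : ∀ i j, ω i j =
      if ((i : ℕ) < p ∧ (j : ℕ) < p ∧ (j : ℕ) = ((i : ℕ) + 1) % p) ∨
         (p ≤ (i : ℕ) ∧ p ≤ (j : ℕ) ∧ (j : ℕ) - p = (((i : ℕ) - p) + 1) % p)
      then 1 else 0)
    (Γ : Matrix (Fin (2 * p)) (Fin (2 * p)) ℤ)
    (hΓ : ∀ i j, Γ i j = if (j : ℕ) = 0 then s i else if (j : ℕ) = p then -s i else 0)
    (Θ : Matrix (Fin (2 * p)) (Fin (2 * p)) ℤ) (hΘ : Θ = (Γ - 1) * ω) :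
    Matrix.det ((1 : Matrix (Fin (2 * p)) (Fin (2 * p)) ℤ[X]) - (X : ℤ[X]) • Θ.map C)
      = (1 - (-1) ^ p * X ^ p) ^ 2
        + 2 * (1 - (-1) ^ p * X ^ p)
          * ((∑ k ∈ Finset.Ico 1 p, C ((-1) ^ k * a k) * X ^ k) + C ((-1 : ℤ) ^ p) * X ^ p) := by
  obtain ⟨n, rfl⟩ : ∃ n, p = n + 1 := ⟨p - 1, by omega⟩
  have hT : ∀ i j, Θ i j = s i * (ω ⟨0, by omega⟩ j - ω ⟨n+1, by omega⟩ j) - ω i j := by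
    intro i j
    rw [hΘ, Matrix.sub_mul, Matrix.one_mul, Matrix.sub_apply, Matrix.mul_apply]
    congr 1
    rw [← Finset.sum_subset (Finset.subset_univ {⟨0, by omega⟩, ⟨n+1, by omega⟩})]
    · rw [Finset.sum_pair (by simp [Fin.ext_iff])]
      simp [hΓ]
      ring
    · intro x _ hx
      simp only [Finset.mem_insert, Finset.mem_singleton, Fin.ext_iff, not_or] at hx
      rw [hΓ, if_neg hx.1, if_neg hx.2, zero_mul]
  -- rotation
  let r : Fin (n+1) ≃ Fin (n+1) := Equiv.addRight 1
  have hr : ∀ i : Fin (n+1), ((r i : Fin (n+1)) : ℕ) = if (i : ℕ) = n then 0 else (i : ℕ) + 1 := by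
    intro i
    simp only [r, Equiv.coe_addRight, Fin.val_add_one, Fin.ext_iff, Fin.val_last]
  let e : Fin (n+1) ⊕ Fin (n+1) ≃ Fin (2 * (n+1)) :=
    (Equiv.sumCongr r r).trans (finSumFinEquiv.trans (finCongr (by ring)))
  have el : ∀ i, ((e (Sum.inl i) : Fin _) : ℕ) = if (i : ℕ) = n then 0 else (i : ℕ) + 1 := by
    intro i; rw [← hr]; simp [e]
  have er : ∀ i, ((e (Sum.inr i) : Fin _) : ℕ) = (n + 1) + if (i : ℕ) = n then 0 else (i : ℕ) + 1 := by
    intro i; rw [← hr]; simp [e, add_comm]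
  let N : Matrix (Fin (n+1)) (Fin (n+1)) ℤ[X] := Matrix.of fun i j =>
    if j = 0 then (if (i : ℕ) = 0 then 1 else 0) + (if (i : ℕ) = n then X else 0) else
      if i = j then 1 else if (j : ℕ) = i + 1 then X else 0
  let b : Fin (n+1) → ℤ := fun i => if (i : ℕ) = n then a 0 else a (i + 1)
  let V : Matrix (Fin (n+1)) (Fin (n+1)) ℤ[X] := Matrix.of fun i j =>
    if j = 0 then X * C (b i) else 0
  have hmod : ∀ k, k < n + 1 → (k + 1) % (n + 1) = if k = n then 0 else k + 1 := by
    intro k hk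
    split_ifs with h
    · subst h; simp
    · exact Nat.mod_eq_of_lt (by omega)
  have hsl : ∀ i, s (e (Sum.inl i)) = b i := by
    intro i
    have := i.2
    rw [hs, el]; simp only [b]; split_ifs <;> first | rfl | omega
  have hsr : ∀ i, s (e (Sum.inr i)) = -b i := by
    intro i
    have := i.2
    rw [hs, er]; simp only [b]; split_ifs <;> first | omega | simp
  have hw : ∀ i j : Fin (n+1), (if (j : ℕ) = n then 0 else (j : ℕ) + 1)
      = ((if (i : ℕ) = n then 0 else (i : ℕ) + 1) + 1) % (n + 1) ↔
        (j : ℕ) = if (i : ℕ) = n then 0 else (i : ℕ) + 1 := by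
    intro i j
    have := i.2
    have := j.2
    rw [hmod _ (by split_ifs <;> omega)]
    grind
  have lt1 : ∀ i : Fin (n+1), (if (i : ℕ) = n then 0 else (i : ℕ) + 1) < n + 1 := by
    intro i
    have := i.2
    split_ifs <;> omega
  have wll : ∀ i j, ω (e (Sum.inl i)) (e (Sum.inl j)) =
      if (j : ℕ) = (if (i : ℕ) = n then 0 else (i : ℕ) + 1) then 1 else 0 := by
    intro i j
    have := lt1 i
    have := lt1 j
    rw [hω, el, el]
    congr 1
    rw [← hw i j]
    apply propext
    constructor
    · rintro (h | h)
      · exact h.2.2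
      · omega
    · intro h; exact Or.inl ⟨lt1 i, lt1 j, h⟩
  have wrr : ∀ i j, ω (e (Sum.inr i)) (e (Sum.inr j)) =
      if (j : ℕ) = (if (i : ℕ) = n then 0 else (i : ℕ) + 1) then 1 else 0 := by
    intro i j
    rw [hω, er, er]
    congr 1
    rw [← hw i j]
    apply propext
    rw [Nat.add_sub_cancel_left, Nat.add_sub_cancel_left]
    constructor
    · rintro (h | h)
      · omega
      · exact h.2.2
    · intro h; exact Or.inr ⟨by omega, by omega, h⟩
  have wlr : ∀ i j, ω (e (Sum.inl i)) (e (Sum.inr j)) = 0 := by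
    intro i j
    have := lt1 i
    rw [hω, el, er, if_neg]
    rintro (h | h) <;> omega
  have wrl : ∀ i j, ω (e (Sum.inr i)) (e (Sum.inl j)) = 0 := by
    intro i j
    have := lt1 j
    rw [hω, el, er, if_neg]
    rintro (h | h) <;> omega
  have e0 : (⟨0, by omega⟩ : Fin (2 * (n+1))) = e (Sum.inl (Fin.last n)) := by
    ext; rw [el]; simp
  have ep : (⟨n+1, by omega⟩ : Fin (2 * (n+1))) = e (Sum.inr (Fin.last n)) := by
    ext; rw [er]; simp
  rw [e0, ep] at hT
  have hblock : ((1 : Matrix (Fin (2 * (n+1))) (Fin (2 * (n+1))) ℤ[X]) - (X : ℤ[X]) • Θ.map C).submatrix e e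
      = Matrix.fromBlocks (N - V) V V (N - V) := by
    have hN : ∀ i j : Fin (n+1), N i j = (if i = j then 1 else 0) +
        X * C (if (j : ℕ) = (if (i : ℕ) = n then 0 else (i : ℕ) + 1) then 1 else 0) := by
      intro i j
      have := i.2
      have := j.2
      simp only [N, Matrix.of_apply, Fin.ext_iff, Fin.val_zero]
      split_ifs <;> first | omega | simp
    ext1 i j
    rcases i with i | i <;> rcases j with j | j <;>
    simp only [Matrix.submatrix_apply, Matrix.sub_apply, Matrix.smul_apply, Matrix.map_apply, hT,
      Matrix.fromBlocks_apply₁₁, Matrix.fromBlocks_apply₁₂, Matrix.fromBlocks_apply₂₁,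
      Matrix.fromBlocks_apply₂₂, wll, wlr, wrl, wrr, hsl, hsr, hN, Matrix.one_apply,
      EmbeddingLike.apply_eq_iff_eq, Sum.inl.injEq, Sum.inr.injEq, reduceCtorEq, if_false,
      V, Matrix.of_apply, Fin.ext_iff, Fin.val_zero, Fin.val_last, if_true, smul_eq_mul] <;>
    split_ifs <;> simp <;> ring
  rw [← Matrix.det_submatrix_equiv_self e, hblock, aux_block]
  have d1 : (N - V + V).det = 1 - (-1) ^ (n+1) * X ^ (n+1) := by
    rw [sub_add_cancel, aux_det]
    simp only [mul_add, Finset.sum_add_distrib]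
    rw [Finset.sum_eq_single 0, Finset.sum_eq_single (Fin.last n)]
    · simp [neg_pow (X : ℤ[X])]; ring
    · intro k _ hk; simp only [ne_eq, Fin.ext_iff, Fin.val_zero, Fin.val_last] at hk; rw [if_neg hk, mul_zero]
    · simp
    · intro k _ hk; simp only [ne_eq, Fin.ext_iff, Fin.val_zero, Fin.val_last] at hk; rw [if_neg hk, mul_zero]
    · simp
  have d2 : (N - V - V).det = N.det - 2 * ∑ i : Fin (n+1), (-X) ^ (i : ℕ) * (X * C (b i)) := by
    have : N - V - V = Matrix.of fun i j : Fin (n+1) => if j = 0 then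
        ((if (i : ℕ) = 0 then 1 else 0) + (if (i : ℕ) = n then X else 0)) - 2 * (X * C (b i)) else
      if i = j then 1 else if (j : ℕ) = i + 1 then X else 0 := by
      ext1 i j
      simp only [N, V, Matrix.sub_apply, Matrix.of_apply]
      by_cases h : j = 0
      · simp only [h, if_true]; ring
      · simp only [h, if_false]; ring
    rw [this, aux_det, aux_det, Finset.mul_sum, ← Finset.sum_sub_distrib]
    refine Finset.sum_congr rfl fun i _ => ?_
    ring
  have d3 : ∑ i : Fin (n+1), (-X) ^ (i : ℕ) * (X * C (b i)) =
      -((∑ k ∈ Finset.Ico 1 (n+1), C ((-1) ^ k * a k) * X ^ k) + C ((-1 : ℤ) ^ (n+1)) * X ^ (n+1)) := by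
    rw [Fin.sum_univ_castSucc, Finset.sum_Ico_eq_sum_range, Finset.sum_range, neg_add,
      ← Finset.sum_neg_distrib]
    congr 1
    · refine Finset.sum_congr rfl fun i _ => ?_
      have := i.2
      simp only [b, Fin.val_castSucc]
      rw [if_neg (by omega), neg_pow (X : ℤ[X]), add_comm 1 (i : ℕ)]
      simp; ring
    · simp [b, ha0, neg_pow (X : ℤ[X])]; ring
  rw [sub_add_cancel] at d1
  rw [sub_add_cancel, d2, d3, d1]
  ring
end

section
/- Let p ≥ 2, let a : {0,…,p−1} → ℤ take values in {−1,0,1} with a(0) = 1, and let Θ be the associated 2p×2p rational matrix Θ = (Γ − I)ω as in the context. Suppose Ψ is a (2p−1)×(2p−1) rational matrix and η : ℚ^{2p} → ℚ^{2p−1} is a surjective linear map with one-dimensional kernel such that η ∘ Θ = Ψ ∘ η and Θv = −v for every v ∈ ker η. Then (1 + t)·det(I − tΨ) = (1 − (−1)^p t^p)² + 2(1 − (−1)^p t^p)·u_p(t) as polynomials in ℚ[t]; equivalently, det(I − tΨ) = (1 − (−1)^p t^p)² D(t), where D(t) is the kneading determinant. -/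
open Polynomial Matrix

lemma aux_blocks {n : Type*} [Fintype n] [DecidableEq n] (B C : Matrix n n ℚ) :
    (fromBlocks B C C B).det = (B + C).det * (B - C).det := by
  have h : fromBlocks 1 1 0 1 * fromBlocks B C C B * fromBlocks 1 (-1) 0 1
      = fromBlocks (B + C) 0 C (B - C) := by
    simp only [fromBlocks_multiply]
    congr 1 <;> simp
    · abel
    · abel
  have h2 := congrArg Matrix.det h
  simpa [det_mul, det_fromBlocks_zero₁₂, det_fromBlocks_zero₂₁] using h2

lemma aux_bidiag (p : ℕ) (t : ℚ) (w : Fin (p + 1) → ℚ) :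
    (Matrix.of (fun i j : Fin (p + 1) => (if i = j then (1 : ℚ) else 0)
      + (if (j : ℕ) = i + 1 then t else 0) + (if j = 0 then w i else 0))).det
      = 1 + ∑ i : Fin (p + 1), (-t) ^ (i : ℕ) * w i := by
  set U : Matrix (Fin (p + 1)) (Fin (p + 1)) ℚ :=
    Matrix.of (fun i j => (if i = j then (1 : ℚ) else 0) + (if (j : ℕ) = i + 1 then t else 0))
    with hU
  have hdet : U.det = 1 := by
    rw [det_of_upperTriangular]
    · simp [hU]
    · intro i j hij
      simp only [id] at hij
      have h1 : i ≠ j := ne_of_gt hij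
      have h2 : (j : ℕ) ≠ i + 1 := by
        have : (j : ℕ) < i := hij
        omega
      simp [hU, h1, h2]
  have hr : replicateRow Unit (fun i : Fin (p + 1) => (-t) ^ (i : ℕ)) * U
      = replicateRow Unit (Pi.single 0 1) := by
    ext x j
    simp only [mul_apply, replicateRow_apply, hU, of_apply, mul_add, Finset.sum_add_distrib]
    refine Fin.cases ?_ (fun k => ?_) j
    · simp
    · have : ∀ i : Fin (p + 1), ((k.succ : Fin (p+1)) : ℕ) = i + 1 ↔ i = k.castSucc := by
        intro i
        rw [Fin.ext_iff]
        simp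
        omega
      simp only [this]
      simp [pow_succ]
  have hr2 : replicateRow Unit (Pi.single (0 : Fin (p + 1)) (1 : ℚ)) * U⁻¹
      = replicateRow Unit (fun i : Fin (p + 1) => (-t) ^ (i : ℕ)) := by
    rw [← hr, Matrix.mul_assoc, Matrix.mul_nonsing_inv _ (by simp [hdet]), Matrix.mul_one]
  have key := det_add_replicateCol_mul_replicateRow (ι := Unit) (A := U) (by simp [hdet]) w
    (Pi.single 0 1)
  rw [hr2, hdet] at key
  have hM : U + replicateCol Unit w * replicateRow Unit (Pi.single (0 : Fin (p + 1)) (1 : ℚ)) =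
      (Matrix.of (fun i j : Fin (p + 1) => (if i = j then (1 : ℚ) else 0)
      + (if (j : ℕ) = i + 1 then t else 0) + (if j = 0 then w i else 0))) := by
    ext i j
    simp [hU, mul_apply, Pi.single_apply]
  rw [← hM, key]
  simp [mul_apply]

/-- sigma -/
def auxS (p : ℕ) : Matrix (Fin p) (Fin p) ℚ :=
  Matrix.of fun i j => if (j : ℕ) = ((i : ℕ) + 1) % p then 1 else 0

/-- rank one matrix -/
def auxG (p : ℕ) (a : ℕ → ℤ) : Matrix (Fin p) (Fin p) ℚ :=
  Matrix.of fun i j => if (j : ℕ) = 0 then (a i : ℚ) else 0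

lemma aux_det_s2 (p : ℕ) (hp : 2 ≤ p) (a : ℕ → ℤ) (t c : ℚ) :
    (1 - t • ((c • auxG p a - 1) * auxS p)).det
      = 1 - (-t) ^ p + c * ∑ i ∈ Finset.range p, (-t) ^ (i + 1) * (a ((i + 1) % p) : ℚ) := by
  obtain ⟨p, rfl⟩ : ∃ q, p = q + 1 := ⟨p - 1, by omega⟩
  rw [← Matrix.smul_mul, det_one_sub_mul_comm, Matrix.mul_smul]
  have := aux_bidiag p t (fun i => (if (i : ℕ) = p then t else 0)
    - t * c * (a (((i : ℕ) + 1) % (p + 1)) : ℚ))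
  have hM : 1 - t • (auxS (p + 1) * (c • auxG (p + 1) a - 1)) =
    (Matrix.of (fun i j : Fin (p + 1) => (if i = j then (1 : ℚ) else 0)
      + (if (j : ℕ) = i + 1 then t else 0) + (if j = 0 then ((if (i : ℕ) = p then t else 0)
    - t * c * (a (((i : ℕ) + 1) % (p + 1)) : ℚ)) else 0))) := by
    ext i j
    have h1 : (auxS (p + 1) * auxG (p + 1) a) i j
        = if j = 0 then (a (((i : ℕ) + 1) % (p + 1)) : ℚ) else 0 := by
      rw [mul_apply, Finset.sum_eq_single
        (⟨((i : ℕ) + 1) % (p + 1), Nat.mod_lt _ (by omega)⟩ : Fin (p + 1))]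
      · simp only [auxS, auxG, of_apply, if_true, one_mul, Fin.ext_iff, Fin.val_zero]
      · intro b _ hb
        have : (b : ℕ) ≠ ((i : ℕ) + 1) % (p + 1) := fun h => hb (Fin.ext h)
        simp [auxS, this]
      · simp
    have h2 : auxS (p + 1) i j = (if (j : ℕ) = i + 1 then 1 else 0)
        + (if j = 0 then (if (i : ℕ) = p then 1 else 0) else 0) := by
      have hi := i.isLt
      have hj := j.isLt
      simp only [auxS, of_apply, Fin.ext_iff, Fin.val_zero]
      rcases Nat.lt_or_ge (i : ℕ) p with h | h
      · rw [Nat.mod_eq_of_lt (by omega)]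
        have : (i : ℕ) ≠ p := by omega
        simp [this]
      · have : (i : ℕ) = p := by omega
        have h3 : (j : ℕ) ≠ p + 1 := by omega
        simp [this, h3]
    rw [Matrix.mul_sub, Matrix.mul_smul, Matrix.mul_one]
    simp only [Matrix.sub_apply, Matrix.smul_apply, smul_eq_mul, h1, h2, of_apply, one_apply]
    split_ifs <;> ring
  rw [hM, this, ← Fin.sum_univ_eq_sum_range
    (fun i => (-t) ^ (i + 1) * (a ((i + 1) % (p + 1)) : ℚ))]
  simp only [mul_sub, Finset.sum_sub_distrib]
  have h4 : ∑ i : Fin (p + 1), (-t) ^ (i : ℕ) * (if (i : ℕ) = p then t else 0)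
      = - (-t) ^ (p + 1) := by
    rw [Finset.sum_eq_single (Fin.last p)]
    · simp; ring
    · intro b _ hb
      have : (b : ℕ) ≠ p := fun h => hb (Fin.ext h)
      simp [this]
    · simp
  rw [h4, Finset.mul_sum, add_sub_assoc', ← sub_eq_add_neg, sub_eq_add_neg _ (Finset.sum _ _),
    ← Finset.sum_neg_distrib]
  congr 1
  apply Finset.sum_congr rfl
  intro i _
  ring

lemma aux_quot (m n : ℕ) (Θ : Matrix (Fin m) (Fin m) ℚ) (Ψ : Matrix (Fin n) (Fin n) ℚ)
    (η : (Fin m → ℚ) →ₗ[ℚ] (Fin n → ℚ))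
    (hsurj : Function.Surjective η)
    (hker : Module.finrank ℚ (LinearMap.ker η) = 1)
    (hcomm : η.comp Θ.mulVecLin = Ψ.mulVecLin.comp η)
    (hneg : ∀ v ∈ LinearMap.ker η, Θ.mulVec v = -v) (t : ℚ) :
    (1 - t • Θ).det = (1 + t) * (1 - t • Ψ).det := by
  have hc : ∀ v, η (Θ *ᵥ v) = Ψ *ᵥ η v := fun v => LinearMap.congr_fun hcomm v
  set f : (Fin m → ℚ) →ₗ[ℚ] (Fin m → ℚ) := Matrix.toLin' (1 - t • Θ) with hf
  set g : (Fin n → ℚ) →ₗ[ℚ] (Fin n → ℚ) := Matrix.toLin' (1 - t • Ψ) with hg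
  have hfv : ∀ v, f v = v - t • (Θ *ᵥ v) := by
    intro v; simp [hf, Matrix.sub_mulVec, Matrix.smul_mulVec]
  have hgv : ∀ v, g v = v - t • (Ψ *ᵥ v) := by
    intro v; simp [hg, Matrix.sub_mulVec, Matrix.smul_mulVec]
  have hfk : ∀ v ∈ LinearMap.ker η, f v = (1 + t) • v := by
    intro v hv; rw [hfv, hneg v hv, add_smul, one_smul, smul_neg, sub_neg_eq_add]
  have hW : LinearMap.ker η ≤ (LinearMap.ker η).comap f := by
    intro v hv
    rw [Submodule.mem_comap, hfk v hv]
    exact Submodule.smul_mem _ _ hv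
  have h := LinearMap.det_eq_det_mul_det (LinearMap.ker η) f hW
  have h1 : f.restrict (p := LinearMap.ker η) (q := LinearMap.ker η) (fun x hx => hW hx) = (1 + t) • LinearMap.id := by
    ext1 v
    apply Subtype.ext
    simp [LinearMap.restrict_apply, hfk v.1 v.2]
  have h2 : LinearMap.det ((LinearMap.ker η).mapQ (LinearMap.ker η) f hW) = LinearMap.det g := by
    rw [← LinearMap.det_conj _ (η.quotKerEquivOfSurjective hsurj)]
    congr 1
    apply LinearMap.ext
    intro y
    obtain ⟨x, rfl⟩ := hsurj y
    have h3 : (η.quotKerEquivOfSurjective hsurj).symm (η x) = Submodule.Quotient.mk x := by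
      rw [LinearEquiv.symm_apply_eq]; rfl
    simp only [LinearMap.comp_apply, LinearEquiv.coe_coe, h3]
    change η (f x) = _
    rw [hfv, hgv, map_sub, map_smul, hc]
  rw [h1, h2, LinearMap.det_smul, hker, hf, hg, LinearMap.det_toLin', LinearMap.det_toLin'] at h
  rw [h]; simp

lemma aux_eval (n : ℕ) (M : Matrix (Fin n) (Fin n) ℚ) (t : ℚ) :
    (Matrix.det ((1 : Matrix (Fin n) (Fin n) ℚ[X]) - (X : ℚ[X]) • M.map C)).eval t
      = (1 - t • M).det := by
  rw [← Polynomial.coe_evalRingHom, RingHom.map_det]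
  congr 1
  ext i j
  by_cases hij : i = j <;> simp [Matrix.one_apply, hij] <;> ring

/-- If the Markov matrix `Ψ` is intertwined with `Θ = (Γ - I) ω` by a surjective map `η`
with one-dimensional kernel on which `Θ` acts as `-id`, then
`(1 + t) det (I - t Ψ) = (1 - (-1)^p t^p)^2 + 2 (1 - (-1)^p t^p) u_p(t)`, i.e.
`det (I - t Ψ) = (1 - (-1)^p t^p)^2 D(t)` with `D` the kneading determinant. -/
theorem det_one_sub_smul_markov (p : ℕ) (hp : 2 ≤ p) (a : ℕ → ℤ)
    (ha : ∀ k < p, a k = -1 ∨ a k = 0 ∨ a k = 1) (ha0 : a 0 = 1)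
    (s : Fin (2 * p) → ℚ)
    (hs : ∀ i, s i = if (i : ℕ) < p then (a i : ℚ) else -(a ((i : ℕ) - p) : ℚ))
    (ω : Matrix (Fin (2 * p)) (Fin (2 * p)) ℚ)
    (hω : ∀ i j, ω i j =
      if ((i : ℕ) < p ∧ (j : ℕ) < p ∧ (j : ℕ) = ((i : ℕ) + 1) % p) ∨
         (p ≤ (i : ℕ) ∧ p ≤ (j : ℕ) ∧ (j : ℕ) - p = (((i : ℕ) - p) + 1) % p)
      then 1 else 0)
    (Γ : Matrix (Fin (2 * p)) (Fin (2 * p)) ℚ)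
    (hΓ : ∀ i j, Γ i j = if (j : ℕ) = 0 then s i else if (j : ℕ) = p then -s i else 0)
    (Θ : Matrix (Fin (2 * p)) (Fin (2 * p)) ℚ) (hΘ : Θ = (Γ - 1) * ω)
    (Ψ : Matrix (Fin (2 * p - 1)) (Fin (2 * p - 1)) ℚ)
    (η : (Fin (2 * p) → ℚ) →ₗ[ℚ] (Fin (2 * p - 1) → ℚ))
    (hsurj : Function.Surjective η)
    (hker : Module.finrank ℚ (LinearMap.ker η) = 1)
    (hcomm : η.comp Θ.mulVecLin = Ψ.mulVecLin.comp η)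
    (hneg : ∀ v ∈ LinearMap.ker η, Θ.mulVec v = -v) :
    (1 + X) * Matrix.det
        ((1 : Matrix (Fin (2 * p - 1)) (Fin (2 * p - 1)) ℚ[X]) - (X : ℚ[X]) • Ψ.map C)
      = (1 - (-1) ^ p * X ^ p) ^ 2
        + 2 * (1 - (-1) ^ p * X ^ p)
          * ((∑ k ∈ Finset.Ico 1 p, C ((-1) ^ k * (a k : ℚ)) * X ^ k)
              + C ((-1 : ℚ) ^ p) * X ^ p) := by
  apply Polynomial.funext
  intro t
  rw [eval_mul, aux_eval]
  have hq := aux_quot _ _ Θ Ψ η hsurj hker hcomm hneg t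
  let e : Fin p ⊕ Fin p ≃ Fin (2 * p) := finSumFinEquiv.trans (finCongr (two_mul p).symm)
  have el : ∀ i, ((e (Sum.inl i) : Fin (2 * p)) : ℕ) = i := fun i => by simp [e]
  have er : ∀ i, ((e (Sum.inr i) : Fin (2 * p)) : ℕ) = p + i := fun i => by simp [e, add_comm]
  have eΓ : Γ.submatrix e e = fromBlocks (auxG p a) (-auxG p a) (-auxG p a) (auxG p a) := by
    ext i j
    rcases i with i | i <;> rcases j with j | j <;>
      have hi := i.isLt <;> have hj := j.isLt <;>
      simp [hΓ, hs, el, er, auxG] <;> split_ifs <;> first | rfl | omega | skip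
  have eω : ω.submatrix e e = fromBlocks (auxS p) 0 0 (auxS p) := by
    ext i j
    rcases i with i | i <;> rcases j with j | j <;>
      have hi := i.isLt <;> have hj := j.isLt <;>
      simp [hω, el, er, auxS, not_le.mpr hi, not_le.mpr hj]
  have eΘ : (1 - t • Θ).submatrix e e = fromBlocks (1 - t • ((auxG p a - 1) * auxS p))
      (t • (auxG p a * auxS p)) (t • (auxG p a * auxS p))
      (1 - t • ((auxG p a - 1) * auxS p)) := by
    have : (1 - t • Θ).submatrix e e
        = 1 - t • ((Γ.submatrix e e - 1) * ω.submatrix e e) := by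
      have h0 : (Γ.submatrix e e - 1) = (Γ - 1).submatrix e e := by
        rw [← submatrix_one_equiv e]; rfl
      rw [hΘ, h0, Matrix.submatrix_mul_equiv, ← submatrix_one_equiv e]
      rfl
    rw [this, eΓ, eω, ← fromBlocks_one]
    simp only [sub_eq_add_neg, fromBlocks_neg, fromBlocks_add, fromBlocks_multiply,
      fromBlocks_smul]
    congr 1 <;> simp
  have h1 : (1 - t • ((auxG p a - 1) * auxS p)) + t • (auxG p a * auxS p)
      = 1 - t • (((0 : ℚ) • auxG p a - 1) * auxS p) := by
    simp only [sub_mul, smul_sub, zero_smul, zero_mul]; simp; abel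
  have h2 : (1 - t • ((auxG p a - 1) * auxS p)) - t • (auxG p a * auxS p)
      = 1 - t • (((2 : ℚ) • auxG p a - 1) * auxS p) := by
    simp only [sub_mul, smul_sub, two_smul, add_mul, smul_add]; abel
  have hd := Matrix.det_submatrix_equiv_self e (1 - t • Θ)
  rw [eΘ, aux_blocks, h1, h2, aux_det_s2 p hp, aux_det_s2 p hp, hq] at hd
  have hsum : ∑ i ∈ Finset.range p, (-t) ^ (i + 1) * (a ((i + 1) % p) : ℚ)
      = ∑ k ∈ Finset.Ico 1 p, (-1) ^ k * (a k : ℚ) * t ^ k + (-1) ^ p * t ^ p := by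
    obtain ⟨q, rfl⟩ : ∃ q, p = q + 1 := ⟨p - 1, by omega⟩
    rw [Finset.sum_range_succ, Finset.sum_Ico_eq_sum_range]
    congr 1
    · apply Finset.sum_congr (by simp)
      intro i hi
      have : i < q := by simpa using hi
      rw [Nat.mod_eq_of_lt (by omega), add_comm 1 i, neg_pow]
      ring
    · rw [Nat.mod_self, ha0, neg_pow]; simp
  rw [hsum] at hd
  simp only [eval_add, eval_sub, eval_mul, eval_pow, eval_one, eval_X, eval_C, eval_neg,
    eval_finsetSum, eval_ofNat]
  rw [← hd, neg_pow t p]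
  ring
end
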